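/- The dual space of a gradient Hesse soliton is a gradient Hesse soliton: suppose f : Ω → ℝ is smooth and β_{ij} − ∇_i∇_jf = λ g_{ij} on Ω for some λ ∈ ℝ, where ∇_i∇_jf = ∂_i∂_jf − Σ_r Γ^r_{ij}∂_rf. Set F = (1/2) log det g (so that α = dF). Then β'_{ij} − ∇_i∇_j(f − 2F) = λ g_{ij} at every point of Ω, where β'_{ij} = β_{ij} − 2∇_iα_j is the second Koszul form of the dual connection D' = 2∇ − D; i.e., the dual structure is a gradient Hesse soliton with potential function f − 2F. -/

import Mathlib

/-! The dual potential is determined by `dF = α` for `F = (1/2) log det g`. By Jacobi's formula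
`∂_v det A = Σ adj(A)_{ki} ∂_v A_{ik}` (`detRows_linearDeriv`), the logarithmic derivative of
`det g` is `tr (g⁻¹ ∂_j g)`, and since third derivatives of `φ` commute this trace is `2 α_j`
(`pd_half_log_det`). Hence `∇_i ∂_j F = ∇_i α_j` on the open set `Ω`, so that
`∇_i∇_j (f - 2F) = ∇_i∇_j f - 2 ∇_i α_j`. The term `2 ∇_i α_j` cancels against the one in
`β'_{ij} = β_{ij} - 2 ∇_i α_j`, leaving the soliton equation for `f`. The differentiability of `α`
needed to differentiate `df - 2α` comes for free from `α = dF` with `F` smooth on `Ω`.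
-/

noncomputable section

/-- Partial derivative in the `i`-th coordinate direction. -/
def pd {n : ℕ} (i : Fin n) (f : (Fin n → ℝ) → ℝ) : (Fin n → ℝ) → ℝ :=
  fun x => fderiv ℝ f x (Pi.single i 1)

variable {n : ℕ}

/-- The Hessian metric `g_{ij} = ∂_i ∂_j φ`. -/
def gmet (φ : (Fin n → ℝ) → ℝ) (x : Fin n → ℝ) : Matrix (Fin n) (Fin n) ℝ :=
  fun i j => pd i (pd j φ) x

/-- The inverse metric `g^{ij}`. -/
def gi (φ : (Fin n → ℝ) → ℝ) (x : Fin n → ℝ) : Matrix (Fin n) (Fin n) ℝ :=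
  (gmet φ x)⁻¹

/-- The lowered difference tensor `γ_{ijk} = (1/2) ∂_i∂_j∂_k φ`. -/
def gam (φ : (Fin n → ℝ) → ℝ) (i j k : Fin n) : (Fin n → ℝ) → ℝ :=
  fun x => (1 / 2) * pd i (pd j (pd k φ)) x

/-- The Christoffel symbols `Γ^i_{jk} = Σ_p g^{ip} γ_{pjk}`. -/
def Chr (φ : (Fin n → ℝ) → ℝ) (i j k : Fin n) : (Fin n → ℝ) → ℝ :=
  fun x => ∑ p, gi φ x i p * gam φ p j k x

/-- The first Koszul form `α_i = Σ_{r,p} g^{rp} γ_{pri}`. -/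
def alph (φ : (Fin n → ℝ) → ℝ) (i : Fin n) : (Fin n → ℝ) → ℝ :=
  fun x => ∑ r, ∑ p, gi φ x r p * gam φ p r i x

/-- The second Koszul form `β_{ij} = ∂_i α_j`. -/
def bet (φ : (Fin n → ℝ) → ℝ) (i j : Fin n) : (Fin n → ℝ) → ℝ :=
  pd i (alph φ j)

/-- Covariant derivative of the first Koszul form `∇_i α_j`. -/
def covAlpha (φ : (Fin n → ℝ) → ℝ) (i j : Fin n) : (Fin n → ℝ) → ℝ :=
  fun x => bet φ i j x - ∑ r, Chr φ r i j x * alph φ r x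

/-- Covariant derivative of a covector field `∇_i X_j`. -/
def covCo (φ : (Fin n → ℝ) → ℝ) (X : Fin n → (Fin n → ℝ) → ℝ) (i j : Fin n) :
    (Fin n → ℝ) → ℝ :=
  fun x => pd i (X j) x - ∑ r, Chr φ r i j x * X r x

/-- The Hessian `∇_i∇_j f` of a function. -/
def covHess (φ f : (Fin n → ℝ) → ℝ) (i j : Fin n) : (Fin n → ℝ) → ℝ :=
  fun x => pd i (pd j f) x - ∑ r, Chr φ r i j x * pd r f x

/-- Covariant derivative of the difference tensor `∇_i γ_{jkl}`. -/
def covGam (φ : (Fin n → ℝ) → ℝ) (i j k l : Fin n) : (Fin n → ℝ) → ℝ :=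
  fun x => pd i (gam φ j k l) x -
    ∑ r, (Chr φ r i j x * gam φ r k l x + Chr φ r i k x * gam φ j r l x +
      Chr φ r i l x * gam φ j k r x)

/-- Second covariant derivative of the first Koszul form `∇_i∇_j α_k`. -/
def cov2Alpha (φ : (Fin n → ℝ) → ℝ) (i j k : Fin n) : (Fin n → ℝ) → ℝ :=
  fun x => pd i (covAlpha φ j k) x -
    ∑ r, (Chr φ r i j x * covAlpha φ r k x + Chr φ r i k x * covAlpha φ j r x)

/-- The curvature tensor `R^i_{jkl}`. -/
def Riem (φ : (Fin n → ℝ) → ℝ) (i j k l : Fin n) : (Fin n → ℝ) → ℝ :=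
  fun x => pd k (Chr φ i l j) x - pd l (Chr φ i k j) x +
    ∑ r, (Chr φ i k r x * Chr φ r l j x - Chr φ i l r x * Chr φ r k j x)

/-- The Ricci tensor `R_{jk} = Σ_s R^s_{jsk}`. -/
def Ricci (φ : (Fin n → ℝ) → ℝ) (j k : Fin n) : (Fin n → ℝ) → ℝ :=
  fun x => ∑ s, Riem φ s j s k x

/-- The scalar curvature `R = Σ g^{jk} R_{jk}`. -/
def Scal (φ : (Fin n → ℝ) → ℝ) : (Fin n → ℝ) → ℝ :=
  fun x => ∑ j, ∑ k, gi φ x j k * Ricci φ j k x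

/-- The Laplace–Beltrami operator of `g`. -/
def lap (φ u : (Fin n → ℝ) → ℝ) : (Fin n → ℝ) → ℝ :=
  fun x => ∑ i, ∑ j, gi φ x i j * (pd i (pd j u) x - ∑ k, Chr φ k i j x * pd k u x)

/-- `|α|²`. -/
def normAlphaSq (φ : (Fin n → ℝ) → ℝ) : (Fin n → ℝ) → ℝ :=
  fun x => ∑ i, ∑ j, gi φ x i j * alph φ i x * alph φ j x

/-- `|γ|²`. -/
def normGamSq (φ : (Fin n → ℝ) → ℝ) : (Fin n → ℝ) → ℝ :=
  fun x => ∑ i, ∑ i', ∑ j, ∑ j', ∑ k, ∑ k',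
    gi φ x i i' * gi φ x j j' * gi φ x k k' * gam φ i j k x * gam φ i' j' k' x

/-- `|∇γ|²`. -/
def normCovGamSq (φ : (Fin n → ℝ) → ℝ) : (Fin n → ℝ) → ℝ :=
  fun x => ∑ i, ∑ i', ∑ j, ∑ j', ∑ k, ∑ k', ∑ l, ∑ l',
    gi φ x i i' * gi φ x j j' * gi φ x k k' * gi φ x l l' *
      covGam φ i j k l x * covGam φ i' j' k' l' x

/-- `|Rm|²` (the upper index is lowered with `g`). -/
def normRmSq (φ : (Fin n → ℝ) → ℝ) : (Fin n → ℝ) → ℝ :=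
  fun x => ∑ i, ∑ i', ∑ j, ∑ j', ∑ k, ∑ k', ∑ l, ∑ l',
    gmet φ x i i' * gi φ x j j' * gi φ x k k' * gi φ x l l' *
      Riem φ i j k l x * Riem φ i' j' k' l' x

/-- `|Ric|²`. -/
def normRicSq (φ : (Fin n → ℝ) → ℝ) : (Fin n → ℝ) → ℝ :=
  fun x => ∑ j, ∑ j', ∑ k, ∑ k',
    gi φ x j j' * gi φ x k k' * Ricci φ j k x * Ricci φ j' k' x

/-- The full contraction `Σ R_{ij} β_{ij}`. -/
def ricBeta (φ : (Fin n → ℝ) → ℝ) : (Fin n → ℝ) → ℝ :=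
  fun x => ∑ i, ∑ i', ∑ j, ∑ j',
    gi φ x i i' * gi φ x j j' * Ricci φ i j x * bet φ i' j' x

/-- The full contraction `Σ R_{ij} ∇_i α_j`. -/
def ricCovAlpha (φ : (Fin n → ℝ) → ℝ) : (Fin n → ℝ) → ℝ :=
  fun x => ∑ i, ∑ i', ∑ j, ∑ j',
    gi φ x i i' * gi φ x j j' * Ricci φ i j x * covAlpha φ i' j' x

/-- The full contraction `Σ (∇_i∇_j α_k) γ_{ijk}`. -/
def cov2AlphaGam (φ : (Fin n → ℝ) → ℝ) : (Fin n → ℝ) → ℝ :=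
  fun x => ∑ i, ∑ i', ∑ j, ∑ j', ∑ k, ∑ k',
    gi φ x i i' * gi φ x j j' * gi φ x k k' * cov2Alpha φ i j k x * gam φ i' j' k' x

variable {n : ℕ}

theorem contDiff_pd {n : ℕ} (i : Fin n) {f : (Fin n → ℝ) → ℝ}
    (hf : ContDiff ℝ (⊤ : ℕ∞) f) : ContDiff ℝ (⊤ : ℕ∞) (pd i f) :=
  (hf.fderiv_right (m := (⊤ : ℕ∞)) (by simp)).clm_apply contDiff_const

theorem differentiableAt_pd {n : ℕ} (i : Fin n) {f : (Fin n → ℝ) → ℝ} {x : Fin n → ℝ}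
    (hf : ContDiffAt ℝ (⊤ : ℕ∞) f x) : DifferentiableAt ℝ (pd i f) x :=
  ((hf.fderiv_right (m := 1) (by norm_cast)).differentiableAt (by simp)).clm_apply
    (differentiableAt_const _)

theorem pd_comm {n : ℕ} (i j : Fin n) {f : (Fin n → ℝ) → ℝ}
    (hf : ContDiff ℝ (⊤ : ℕ∞) f) : pd i (pd j f) = pd j (pd i f) := by
  funext x
  have hd : DifferentiableAt ℝ (fderiv ℝ f) x :=
    ((hf.fderiv_right (m := 1) (by norm_cast)).differentiable (by simp)) x
  have key : ∀ a b : Fin n, pd a (pd b f) x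
      = fderiv ℝ (fderiv ℝ f) x (Pi.single a 1) (Pi.single b 1) := by
    intro a b
    change fderiv ℝ (fun y => fderiv ℝ f y (Pi.single b 1)) x (Pi.single a 1) = _
    rw [fderiv_clm_apply hd (differentiableAt_const _)]
    simp
  rw [key, key]
  exact (hf.contDiffAt.isSymmSndFDerivAt
    (by simp only [minSmoothness_of_isRCLikeNormedField]; norm_cast)) _ _

/-- The determinant as a continuous multilinear map of the rows of a matrix. -/
def detRows (n : ℕ) : ContinuousMultilinearMap ℝ (fun _ : Fin n => Fin n → ℝ) ℝ where
  toMultilinearMap := (Matrix.detRowAlternating (n := Fin n) (R := ℝ)).toMultilinearMap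
  cont := by
    change Continuous fun A : Matrix (Fin n) (Fin n) ℝ => A.det
    exact continuous_id.matrix_det

theorem detRows_apply {n : ℕ} (A : Matrix (Fin n) (Fin n) ℝ) : detRows n A = A.det := rfl

/-- Jacobi's formula: `d(det)_A (B) = Σ_i Σ_k adj(A)_{ki} B_{ik}`. -/
theorem detRows_linearDeriv {n : ℕ} (A B : Matrix (Fin n) (Fin n) ℝ) :
    (detRows n).linearDeriv A B = ∑ i, ∑ k, A.adjugate k i * B i k := by
  refine ((detRows n).linearDeriv_apply _ _).trans ?_
  refine Finset.sum_congr rfl fun i _ => ?_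
  change (A.updateRow i (B i)).det = _
  rw [← Matrix.cramer_transpose_apply, Matrix.cramer_eq_adjugate_mulVec,
    ← Matrix.adjugate_transpose]
  rfl

theorem contDiff_gmet {n : ℕ} {φ : (Fin n → ℝ) → ℝ} (hφ : ContDiff ℝ (⊤ : ℕ∞) φ) :
    ContDiff ℝ (⊤ : ℕ∞) (fun (y : Fin n → ℝ) (i j : Fin n) => gmet φ y i j) :=
  contDiff_pi' fun i => contDiff_pi' fun j => contDiff_pd i (contDiff_pd j hφ)

theorem contDiff_det_gmet {n : ℕ} {φ : (Fin n → ℝ) → ℝ} (hφ : ContDiff ℝ (⊤ : ℕ∞) φ) :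
    ContDiff ℝ (⊤ : ℕ∞) (fun y => (gmet φ y).det) :=
  (detRows n).contDiff.comp (contDiff_gmet hφ)

theorem pd_det_gmet {n : ℕ} {φ : (Fin n → ℝ) → ℝ} (hφ : ContDiff ℝ (⊤ : ℕ∞) φ)
    (j : Fin n) (x : Fin n → ℝ) :
    pd j (fun y => (gmet φ y).det) x
      = ∑ p, ∑ r, (gmet φ x).adjugate p r * pd j (pd r (pd p φ)) x := by
  have hG : HasFDerivAt (fun (y : Fin n → ℝ) (i j : Fin n) => gmet φ y i j) _ x :=
    ((contDiff_gmet hφ).differentiable (by simp) x).hasFDerivAt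
  have h := ((detRows n).hasFDerivAt (x := fun i j => gmet φ x i j)).comp x hG
  have hd : ∀ r p, fderiv ℝ (fun (y : Fin n → ℝ) (i j : Fin n) => gmet φ y i j) x
      (Pi.single j 1) r p = pd j (pd r (pd p φ)) x := by
    intro r p
    have h1 := hasFDerivAt_pi'.1 (hasFDerivAt_pi'.1 hG r) p
    exact (congrArg (fun L => L (Pi.single j 1)) h1.fderiv).symm
  change fderiv ℝ (fun y => (gmet φ y).det) x (Pi.single j 1) = _
  rw [show fderiv ℝ (fun y => (gmet φ y).det) x = _ from h.fderiv]
  refine (detRows_linearDeriv (gmet φ x) _).trans ?_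
  rw [Finset.sum_comm]
  exact Finset.sum_congr rfl fun p _ => Finset.sum_congr rfl fun r _ =>
    congrArg _ (hd r p)

theorem contDiffAt_half_log_det {n : ℕ} {φ : (Fin n → ℝ) → ℝ}
    (hφ : ContDiff ℝ (⊤ : ℕ∞) φ) {x : Fin n → ℝ} (hx : (gmet φ x).PosDef) :
    ContDiffAt ℝ (⊤ : ℕ∞) (fun y => (1 / 2) * Real.log (gmet φ y).det) x :=
  contDiffAt_const.mul ((contDiff_det_gmet hφ).contDiffAt.log hx.det_pos.ne')

/-- The first Koszul form is exact: `α = dF` with `F = (1/2) log det g`. -/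
theorem pd_half_log_det {n : ℕ} {φ : (Fin n → ℝ) → ℝ}
    (hφ : ContDiff ℝ (⊤ : ℕ∞) φ) {x : Fin n → ℝ} (hx : (gmet φ x).PosDef) (j : Fin n) :
    pd j (fun y => (1 / 2) * Real.log (gmet φ y).det) x = alph φ j x := by
  have hdet := hx.det_pos.ne'
  have hD : HasFDerivAt (fun y => (gmet φ y).det) _ x :=
    ((contDiff_det_gmet hφ).differentiable (by simp) x).hasFDerivAt
  have h := (hD.log hdet).const_mul (1 / 2 : ℝ)
  have h2 : pd j (fun y => (1 / 2) * Real.log (gmet φ y).det) x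
      = (1 / 2) * (((gmet φ x).det)⁻¹ * pd j (fun y => (gmet φ y).det) x) :=
    congrArg (fun L => L (Pi.single j 1)) h.fderiv
  rw [h2, pd_det_gmet hφ, alph]
  simp only [Finset.mul_sum]
  refine Finset.sum_congr rfl fun r _ => Finset.sum_congr rfl fun p _ => ?_
  -- total symmetry of the third derivatives moves the index `j` to the last place
  have hs : pd j (pd p (pd r φ)) = pd p (pd r (pd j φ)) := by
    rw [pd_comm j p (contDiff_pd r hφ), pd_comm j r hφ]
  rw [hs, gam, gi, Matrix.inv_def, Matrix.smul_apply, Ring.inverse_eq_inv', smul_eq_mul]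
  ring

theorem dual_of_gradient_hesse_soliton {n : ℕ} (hn : 1 ≤ n) (φ : (Fin n → ℝ) → ℝ)
    (hφ : ContDiff ℝ (⊤ : ℕ∞) φ) (Ω : Set (Fin n → ℝ)) (hΩ : IsOpen Ω)
    (hconn : IsConnected Ω) (hpos : ∀ x ∈ Ω, (gmet φ x).PosDef)
    (f : (Fin n → ℝ) → ℝ) (hf : ContDiff ℝ (⊤ : ℕ∞) f) (lam : ℝ)
    (hsol : ∀ x ∈ Ω, ∀ i j, bet φ i j x - covHess φ f i j x = lam * gmet φ x i j) :
    ∀ x ∈ Ω, ∀ i j,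
      (bet φ i j x - 2 * covAlpha φ i j x) -
        covHess φ (fun y => f y - 2 * ((1 / 2) * Real.log (gmet φ y).det)) i j x
        = lam * gmet φ x i j := by
  intro x hx i j
  set F : (Fin n → ℝ) → ℝ := fun y => (1 / 2) * Real.log (gmet φ y).det with hF
  have hFs : ∀ y ∈ Ω, ContDiffAt ℝ (⊤ : ℕ∞) F y := fun y hy =>
    contDiffAt_half_log_det hφ (hpos y hy)
  have hdF : ∀ y ∈ Ω, ∀ k, pd k F y = alph φ k y := fun y hy k =>
    pd_half_log_det hφ (hpos y hy) k
  have hnhds : ∀ᶠ y in nhds x, y ∈ Ω := hΩ.mem_nhds hx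
  have hd1 : ∀ y ∈ Ω, ∀ k, pd k (fun z => f z - 2 * F z) y = pd k f y - 2 * alph φ k y := by
    intro y hy k
    rw [← hdF y hy k]
    have h1 := (hf.differentiable (by simp) y).hasFDerivAt
    have h2 := ((hFs y hy).differentiableAt (by simp)).hasFDerivAt
    exact congrArg (fun L => L (Pi.single k 1)) (h1.sub (h2.const_mul 2)).fderiv
  have hα : DifferentiableAt ℝ (alph φ j) x :=
    (differentiableAt_pd j (hFs x hx)).congr_of_eventuallyEq
      (hnhds.mono fun y hy => (hdF y hy j).symm)
  have hd2 : pd i (pd j (fun z => f z - 2 * F z)) x = pd i (pd j f) x - 2 * bet φ i j x := by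
    have he : pd j (fun z => f z - 2 * F z) =ᶠ[nhds x] fun y => pd j f y - 2 * alph φ j y :=
      hnhds.mono fun y hy => hd1 y hy j
    have h1 := (differentiableAt_pd j hf.contDiffAt (x := x)).hasFDerivAt
    have h2 := h1.sub (hα.hasFDerivAt.const_mul 2)
    exact congrArg (fun L => L (Pi.single i 1)) (he.fderiv_eq.trans h2.fderiv)
  have hH : covHess φ (fun z => f z - 2 * F z) i j x
      = covHess φ f i j x - 2 * covAlpha φ i j x := by
    simp only [covHess, covAlpha, hd2, hd1 x hx, mul_sub, Finset.sum_sub_distrib,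
      Finset.mul_sum]
    simp only [mul_left_comm _ (2 : ℝ)]
    ring
  have hs := hsol x hx i j
  change _ - covHess φ (fun z => f z - 2 * F z) i j x = _
  rw [hH]
  linarith


end
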